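/- arXiv:1805.09118 — 4 statements merged into one kernel-verified Lean document; each statement's English description precedes it below -/
import Mathlib

section
/- Let m ≥ 3 with 3 | m, and let a, e, ℓ be positive integers with e | m², a² | e, (e/a) | m, e/a² odd, gcd(e/a², a) = 1, ℓ | m, and such that there exists a positive integer w with (e/a²) | (w² − w + 1). Then there exists a subgroup G of M with |G| = 3e such that: N(G) has order e; π(G) is generated by a 3-cycle; |N(G) ∩ H_i| = a for each i ∈ {1,2,3}; every element of G ∖ N(G) has order 3; and the number of elements of G ∖ N(G) whose W-component lies in the kernel of s₃ equals 2e if a | m/3 and ℓ | m/3, equals 0 if a | m/3 and ℓ ∤ m/3, and equals 2e/3 if a ∤ m/3. -/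
/-- `V = (ZMod m)³`, written multiplicatively. -/
abbrev Vgrp (m : ℕ) : Type := Fin 3 → Multiplicative (ZMod m)

/-- The diagonal embedding `ZMod m → (ZMod m)³`. -/
def diagHom (m : ℕ) : Multiplicative (ZMod m) →* Vgrp m :=
  MonoidHom.mk' (fun t _ => t) (fun _ _ => rfl)

/-- The diagonal subgroup `Δ = {(t,t,t)}` of `(ZMod m)³`. -/
def Δgrp (m : ℕ) : Subgroup (Vgrp m) := (diagHom m).range

/-- `W = (ZMod m)³ ⧸ Δ`. -/
abbrev Wgrp (m : ℕ) : Type := Vgrp m ⧸ Δgrp m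

/-- The action of `S₃ = Equiv.Perm (Fin 3)` on `(ZMod m)³` permuting the coordinates. -/
def permV (m : ℕ) : Equiv.Perm (Fin 3) →* MulAut (Vgrp m) :=
  MonoidHom.mk'
    (fun σ => MulEquiv.arrowCongr σ (MulEquiv.refl (Multiplicative (ZMod m))))
    (fun σ τ => by ext v i; rfl)

lemma permV_map_diag (m : ℕ) (σ : Equiv.Perm (Fin 3)) :
    (Δgrp m).map (permV m σ) = Δgrp m := by
  ext v
  constructor
  · rintro ⟨_, ⟨t, rfl⟩, rfl⟩
    exact ⟨t, rfl⟩
  · rintro ⟨t, rfl⟩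
    exact ⟨diagHom m t, ⟨t, rfl⟩, rfl⟩

/-- The action of `S₃` on `W`, permuting the three coordinates (well defined since
`Δ` is invariant). -/
def permW (m : ℕ) : Equiv.Perm (Fin 3) →* MulAut (Wgrp m) :=
  MonoidHom.mk'
    (fun σ => QuotientGroup.congr (Δgrp m) (Δgrp m) (permV m σ) (permV_map_diag m σ))
    (fun σ τ => by
      ext x
      refine QuotientGroup.induction_on x (fun v => ?_)
      rfl)

/-- `M = W ⋊ S₃`. -/
abbrev Mgrp (m : ℕ) : Type := Wgrp m ⋊[permW m] Equiv.Perm (Fin 3)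

/-- `N(G) = G ∩ W`, where `W` is identified with the kernel of the projection
`π = rightHom : M → S₃` (i.e. with `W × {1} ≤ M`). -/
def NG {m : ℕ} (G : Subgroup (Mgrp m)) : Subgroup (Mgrp m) :=
  G ⊓ (SemidirectProduct.rightHom : Mgrp m →* Equiv.Perm (Fin 3)).ker

/-- The subgroup of `V = (ZMod m)³` of triples whose two coordinates with index
different from `i` are equal. -/
def HV (m : ℕ) (i : Fin 3) : Subgroup (Vgrp m) :=
  MonoidHom.ker (MonoidHom.mk' (fun v : Vgrp m => v (i + 1) / v (i + 2))
    (fun _ _ => mul_div_mul_comm _ _ _ _))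

/-- `H_i ≤ W`: classes of triples whose two coordinates with index different
from `i` are equal. -/
def Hsub (m : ℕ) (i : Fin 3) : Subgroup (Wgrp m) :=
  (HV m i).map (QuotientGroup.mk' (Δgrp m))

/-- `H_i`, identified with the subgroup `H_i × {1}` of `M`. -/
def HsubM (m : ℕ) (i : Fin 3) : Subgroup (Mgrp m) :=
  (Hsub m i).map (SemidirectProduct.inl : Wgrp m →* Mgrp m)

/-- The subgroup `3·(ZMod m)` of `ZMod m`. -/
def threeSub (m : ℕ) : AddSubgroup (ZMod m) :=
  AddMonoidHom.range (AddMonoidHom.mk' (fun x : ZMod m => 3 * x) (fun x y => mul_add 3 x y))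

/-- The homomorphism `V → (ZMod m)⧸(3·ZMod m)` sending `(x,y,z)` to the class of
`x + y + z` (written multiplicatively). -/
def sumV (m : ℕ) : Vgrp m →* Multiplicative (ZMod m ⧸ threeSub m) :=
  (AddMonoidHom.toMultiplicative (QuotientAddGroup.mk' (threeSub m))).comp
    (MonoidHom.mk' (fun v : Vgrp m => v 0 * v 1 * v 2)
      (fun v w => by
        simp only [Pi.mul_apply]
        rw [mul_mul_mul_comm (v 0) (w 0) (v 1) (w 1),
          mul_mul_mul_comm (v 0 * v 1) (w 0 * w 1) (v 2) (w 2)]))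

/-- `s₃ : W → (ZMod m)⧸(3·ZMod m)`, the well-defined homomorphism sending the class
of `(x,y,z)` to the class of `x + y + z`. -/
def s3Hom (m : ℕ) : Wgrp m →* Multiplicative (ZMod m ⧸ threeSub m) :=
  QuotientGroup.lift (Δgrp m) (sumV m) (by
    rintro v ⟨t, rfl⟩
    show sumV m (diagHom m t) = 1
    have h : ((Multiplicative.toAdd t + Multiplicative.toAdd t + Multiplicative.toAdd t : ZMod m) :
        ZMod m ⧸ threeSub m) = 0 :=
      (QuotientAddGroup.eq_zero_iff _).mpr
        ⟨Multiplicative.toAdd t, by show 3 * Multiplicative.toAdd t = _; ring⟩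
    exact congrArg (⇑Multiplicative.ofAdd) h)

/-- class of a triple -/
def cls {m : ℕ} (x y z : ZMod m) : Wgrp m :=
  QuotientGroup.mk (![Multiplicative.ofAdd x, Multiplicative.ofAdd y, Multiplicative.ofAdd z] : Vgrp m)

lemma cls_exists {m : ℕ} (u : Wgrp m) : ∃ x y z : ZMod m, u = cls x y z := by
  refine QuotientGroup.induction_on u (fun v => ?_)
  refine ⟨Multiplicative.toAdd (v 0), Multiplicative.toAdd (v 1), Multiplicative.toAdd (v 2), ?_⟩
  unfold cls
  congr 1
  funext i
  fin_cases i <;> rfl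

lemma cls_mul {m : ℕ} (x y z x' y' z' : ZMod m) :
    cls x y z * cls x' y' z' = cls (x + x') (y + y') (z + z') := by
  unfold cls
  rw [← QuotientGroup.mk_mul]
  congr 1
  funext i
  fin_cases i <;> rfl

lemma cls_diag {m : ℕ} (x : ZMod m) : cls x x x = 1 := by
  unfold cls
  rw [QuotientGroup.eq_one_iff]
  refine ⟨Multiplicative.ofAdd x, ?_⟩
  funext i
  fin_cases i <;> rfl

/-- the rotation -/
def rot : Equiv.Perm (Fin 3) := finRotate 3

lemma rot_three : rot.IsThreeCycle := by
  rw [← card_support_eq_three_iff]; unfold rot; decide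

lemma permW_cls {m : ℕ} (x y z : ZMod m) : permW m rot (cls x y z) = cls z x y := by
  unfold cls
  show (QuotientGroup.mk (permV m rot _) : Wgrp m) = _
  congr 1
  funext i
  fin_cases i <;> rfl

lemma permW_norm {m : ℕ} (u : Wgrp m) :
    u * permW m rot u * permW m rot (permW m rot u) = 1 := by
  obtain ⟨x, y, z, rfl⟩ := cls_exists u
  rw [permW_cls, permW_cls, cls_mul, cls_mul]
  rw [← cls_diag (x + y + z)]
  congr 1 <;> ring

lemma s3_cls {m : ℕ} (x y z : ZMod m) :
    s3Hom m (cls x y z) = Multiplicative.ofAdd ((x + y + z : ZMod m) : ZMod m ⧸ threeSub m) := rfl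

lemma s3_cls_one {m : ℕ} (x y z : ZMod m) :
    s3Hom m (cls x y z) = 1 ↔ ∃ q : ZMod m, x + y + z = 3 * q := by
  rw [s3_cls, ofAdd_eq_one, QuotientAddGroup.eq_zero_iff]
  constructor
  · rintro ⟨q, hq⟩; exact ⟨q, hq.symm⟩
  · rintro ⟨q, hq⟩; exact ⟨q, hq.symm⟩

lemma s3_perm {m : ℕ} (σ : Equiv.Perm (Fin 3)) (u : Wgrp m) :
    s3Hom m (permW m σ u) = s3Hom m u := by
  refine QuotientGroup.induction_on u (fun v => ?_)
  show sumV m (permV m σ v) = sumV m v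
  have : ∀ v : Vgrp m, sumV m v = Multiplicative.ofAdd
    (QuotientAddGroup.mk' (threeSub m) (Multiplicative.toAdd (∏ i, v i))) := by
    intro v; rw [Fin.prod_univ_three]; rfl
  rw [this, this]
  congr 3
  exact Equiv.prod_comp σ⁻¹ v

/-- s3 on M -/
def s3M (m : ℕ) : Mgrp m →* Multiplicative (ZMod m ⧸ threeSub m) :=
  MonoidHom.mk' (fun g => s3Hom m g.left) (fun g h => by
    rw [SemidirectProduct.mul_left, map_mul, s3_perm])

lemma cast_zero_iff {m d : ℕ} (h : d ∣ m) (s : ZMod m) :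
    ZMod.castHom h (ZMod d) s = 0 ↔ ∃ q : ZMod m, s = d * q := by
  constructor
  · intro hs
    obtain ⟨z, rfl⟩ := ZMod.intCast_surjective s
    rw [map_intCast, ZMod.intCast_zmod_eq_zero_iff_dvd] at hs
    obtain ⟨q, rfl⟩ := hs
    exact ⟨q, by push_cast; rfl⟩
  · rintro ⟨q, rfl⟩
    rw [map_mul, map_natCast, ZMod.natCast_self, zero_mul]

lemma card_quot3 {m : ℕ} (hm3 : 3 ∣ m) :
    Nat.card (Multiplicative (ZMod m ⧸ threeSub m)) = 3 := by
  have h : threeSub m = (ZMod.castHom hm3 (ZMod 3)).toAddMonoidHom.ker := by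
    ext s
    rw [AddMonoidHom.mem_ker]
    refine Iff.trans ?_ (cast_zero_iff hm3 s).symm
    constructor
    · rintro ⟨q, hq⟩; exact ⟨q, hq.symm⟩
    · rintro ⟨q, hq⟩; exact ⟨q, hq.symm⟩
  have e := QuotientAddGroup.quotientKerEquivOfSurjective
    (ZMod.castHom hm3 (ZMod 3)).toAddMonoidHom (ZMod.castHom_surjective hm3)
  rw [Nat.card_congr Multiplicative.toAdd, h, Nat.card_congr e.toEquiv, Nat.card_zmod]

lemma card_W (m : ℕ) (hm : m ≠ 0) : Nat.card (Wgrp m) = m ^ 2 := by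
  have h := Subgroup.card_eq_card_quotient_mul_card_subgroup (Δgrp m)
  have h1 : Nat.card (Vgrp m) = m ^ 3 := by
    rw [Nat.card_fun, Nat.card_congr Multiplicative.toAdd, Nat.card_zmod]; simp
  have h2 : Nat.card (Δgrp m) = m := by
    have : Function.Injective (diagHom m) := fun x y h => congrFun h 0
    unfold Δgrp
    rw [← Nat.card_congr (MonoidHom.ofInjective this).toEquiv,
      Nat.card_congr Multiplicative.toAdd, Nat.card_zmod]
  rw [h1, h2] at h
  have : m ^ 2 * m = Nat.card (Wgrp m) * m := by rw [← h]; ring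
  exact (Nat.eq_of_mul_eq_mul_right (Nat.pos_of_ne_zero hm) this).symm

lemma card_cast_ker {m d : ℕ} (h : d ∣ m) :
    Nat.card (AddMonoidHom.toMultiplicative (ZMod.castHom h (ZMod d)).toAddMonoidHom).ker * d = m := by
  have h1 := Subgroup.card_mul_index
    (AddMonoidHom.toMultiplicative (ZMod.castHom h (ZMod d)).toAddMonoidHom).ker
  rw [Subgroup.index_ker, MonoidHom.range_eq_top.mpr, Subgroup.card_top,
    Nat.card_congr Multiplicative.toAdd, Nat.card_zmod, Nat.card_congr Multiplicative.toAdd,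
    Nat.card_zmod] at h1
  · exact h1
  · exact ZMod.castHom_surjective h

/-- defining hom -/
def psiV {m k d : ℕ} (hk : k ∣ m) (hd : d ∣ m) (w : ℕ) :
    Vgrp m →* Multiplicative (ZMod k × ZMod d) :=
  MonoidHom.mk' (fun v => Multiplicative.ofAdd
    (ZMod.castHom hk (ZMod k) (Multiplicative.toAdd (v 1) - Multiplicative.toAdd (v 2)),
     ZMod.castHom hd (ZMod d) (Multiplicative.toAdd (v 0) - Multiplicative.toAdd (v 2) -
      w * (Multiplicative.toAdd (v 1) - Multiplicative.toAdd (v 2)))))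
    (fun v u => by
      rw [← ofAdd_add, Prod.mk_add_mk, ← map_add, ← map_add]
      simp only [Pi.mul_apply, toAdd_mul]
      congr 3 <;> ring)

/-- defining hom on W -/
def psiW {m k d : ℕ} (hk : k ∣ m) (hd : d ∣ m) (w : ℕ) :
    Wgrp m →* Multiplicative (ZMod k × ZMod d) :=
  QuotientGroup.lift (Δgrp m) (psiV hk hd w) (by
    rintro v ⟨t, rfl⟩
    show Multiplicative.ofAdd
      (ZMod.castHom hk (ZMod k) (Multiplicative.toAdd t - Multiplicative.toAdd t),
       ZMod.castHom hd (ZMod d) (Multiplicative.toAdd t - Multiplicative.toAdd t -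
        w * (Multiplicative.toAdd t - Multiplicative.toAdd t))) = 1
    rw [ofAdd_eq_one]
    simp)

lemma psiW_cls {m k d : ℕ} (hk : k ∣ m) (hd : d ∣ m) (w : ℕ) (x y z : ZMod m) :
    psiW hk hd w (cls x y z) = Multiplicative.ofAdd (ZMod.castHom hk (ZMod k) (y - z),
      ZMod.castHom hd (ZMod d) (x - z - w * (y - z))) := rfl

lemma mem_ker_psi {m k d : ℕ} (hk : k ∣ m) (hd : d ∣ m) (w : ℕ) (x y z : ZMod m) :
    cls x y z ∈ (psiW hk hd w).ker ↔
      (∃ p : ZMod m, y - z = k * p) ∧ ∃ q : ZMod m, x - z - w * (y - z) = d * q := by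
  rw [MonoidHom.mem_ker, psiW_cls, ofAdd_eq_one, Prod.mk_eq_zero, cast_zero_iff, cast_zero_iff]

lemma card_ker_psi {m k d : ℕ} (hm : m ≠ 0) (hk : k ∣ m) (hd : d ∣ m) (w : ℕ) :
    Nat.card (psiW hk hd w).ker * (k * d) = m ^ 2 := by
  have h1 := Subgroup.card_mul_index (psiW hk hd w).ker
  rw [Subgroup.index_ker, MonoidHom.range_eq_top.mpr, Subgroup.card_top,
    Nat.card_congr Multiplicative.toAdd, Nat.card_prod, Nat.card_zmod, Nat.card_zmod,
    card_W m hm] at h1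
  · exact h1
  · intro b
    obtain ⟨y, hy⟩ := ZMod.castHom_surjective hk (Multiplicative.toAdd b).1
    obtain ⟨x, hx⟩ := ZMod.castHom_surjective hd (Multiplicative.toAdd b).2
    refine ⟨cls (x + w * y) y 0, ?_⟩
    rw [psiW_cls, sub_zero, sub_zero, add_sub_cancel_right, hx, hy]
    rfl

lemma ker_psi_perm {m k n w : ℕ} (hk : k ∣ m) (hd : k * n ∣ m) (r : ℕ) (hr : w ^ 2 + 1 = n * r + w)
    (u : Wgrp m) (hu : u ∈ (psiW hk hd w).ker) : permW m rot u ∈ (psiW hk hd w).ker := by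
  obtain ⟨x, y, z, rfl⟩ := cls_exists u
  rw [mem_ker_psi] at hu
  rw [permW_cls, mem_ker_psi]
  obtain ⟨⟨p, hp⟩, q, hq⟩ := hu
  have hr' : (w : ZMod m) ^ 2 + 1 = n * r + w := by exact_mod_cast congrArg (Nat.cast (R := ZMod m)) hr
  push_cast at hq ⊢
  refine ⟨⟨n * q + w * p - p, ?_⟩, ⟨- w * q - p * r, ?_⟩⟩
  · linear_combination hq + (w - 1) * hp
  · linear_combination -w * hq - (n * r) * hp - (y - z) * hr'

/-- embedding of H_i -/
def iotaH (m : ℕ) (i : Fin 3) : Multiplicative (ZMod m) →* Wgrp m :=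
  (QuotientGroup.mk' (Δgrp m)).comp (MonoidHom.mulSingle (fun _ : Fin 3 => Multiplicative (ZMod m)) i)

lemma iotaH_0 {m : ℕ} (s : ZMod m) : iotaH m 0 (Multiplicative.ofAdd s) = cls s 0 0 := by
  unfold iotaH cls
  show QuotientGroup.mk _ = _
  congr 1; funext i; fin_cases i <;> rfl

lemma iotaH_1 {m : ℕ} (s : ZMod m) : iotaH m 1 (Multiplicative.ofAdd s) = cls 0 s 0 := by
  unfold iotaH cls
  show QuotientGroup.mk _ = _
  congr 1; funext i; fin_cases i <;> rfl

lemma iotaH_2 {m : ℕ} (s : ZMod m) : iotaH m 2 (Multiplicative.ofAdd s) = cls 0 0 s := by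
  unfold iotaH cls
  show QuotientGroup.mk _ = _
  congr 1; funext i; fin_cases i <;> rfl

lemma iotaH_inj {m : ℕ} (i : Fin 3) : Function.Injective (iotaH m i) := by
  rw [injective_iff_map_eq_one]
  intro s hs
  obtain ⟨t, ht⟩ := (QuotientGroup.eq_one_iff _).mp hs
  have h1 := congrFun ht i
  have h2 := congrFun ht (i + 1)
  have hne : i + 1 ≠ i := by fin_cases i <;> decide
  rw [MonoidHom.mulSingle_apply, Pi.mulSingle_eq_same] at h1
  rw [MonoidHom.mulSingle_apply, Pi.mulSingle_eq_of_ne hne] at h2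
  rw [← h1, ← h2]; rfl

lemma iotaH_range {m : ℕ} (i : Fin 3) : (iotaH m i).range = Hsub m i := by
  ext u
  constructor
  · rintro ⟨s, rfl⟩
    refine ⟨_, ?_, rfl⟩
    show (Pi.mulSingle i s : Vgrp m) (i + 1) / (Pi.mulSingle i s : Vgrp m) (i + 2) = 1
    rw [Pi.mulSingle_eq_of_ne (by fin_cases i <;> decide),
      Pi.mulSingle_eq_of_ne (by fin_cases i <;> decide), div_one]
  · rintro ⟨v, hv, rfl⟩
    have hv' : v (i + 1) = v (i + 2) := div_eq_one.mp hv
    refine ⟨v i / v (i + 1), ?_⟩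
    show QuotientGroup.mk _ = QuotientGroup.mk _
    rw [QuotientGroup.eq]
    refine ⟨v (i + 1), ?_⟩
    funext j
    show v (i + 1) = ((Pi.mulSingle i (v i / v (i + 1)) : Vgrp m) j)⁻¹ * v j
    by_cases hj : j = i
    · subst hj; rw [Pi.mulSingle_eq_same]; simp
    · rw [Pi.mulSingle_eq_of_ne hj, inv_one, one_mul]
      have : j = i + 1 ∨ j = i + 2 := by
        clear hv' hv; revert hj; revert i j; decide
      rcases this with rfl | rfl
      · rfl
      · exact hv'

lemma card_ker_H {m k n w a : ℕ} (hm : m = a * (k * n)) (hkn : 0 < k * n)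
    (hk : k ∣ m) (hd : k * n ∣ m) (r : ℕ) (hr : w ^ 2 + 1 = n * r + w) (i : Fin 3) :
    Nat.card ((psiW hk hd w).ker ⊓ Hsub m i : Subgroup (Wgrp m)) = a := by
  have key : (psiW hk hd w).ker ⊓ Hsub m i =
      ((AddMonoidHom.toMultiplicative (ZMod.castHom hd (ZMod (k * n))).toAddMonoidHom).ker).map
        (iotaH m i) := by
    have hmem : ∀ s : ZMod m, iotaH m i (Multiplicative.ofAdd s) ∈ (psiW hk hd w).ker ↔
        ∃ q : ZMod m, s = ((k * n : ℕ) : ZMod m) * q := by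
      have hr' : (w : ZMod m) ^ 2 + 1 = n * r + w := by
        exact_mod_cast congrArg (Nat.cast (R := ZMod m)) hr
      intro s
      fin_cases i
      · show iotaH m 0 _ ∈ _ ↔ _
        rw [iotaH_0, mem_ker_psi]
        simp only [sub_zero, mul_zero]
        exact ⟨fun h => h.2, fun h => ⟨⟨0, by simp⟩, h⟩⟩
      · show iotaH m 1 _ ∈ _ ↔ _
        rw [iotaH_1, mem_ker_psi]
        push_cast
        constructor
        · rintro ⟨⟨p, hp⟩, q, hq⟩
          exact ⟨-(1 - w) * q + r * p, by linear_combination -(1 - (w : ZMod m)) * hq + (n * r) * hp + s * hr'⟩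
        · rintro ⟨q, hq⟩
          exact ⟨⟨n * q, by linear_combination hq⟩, ⟨-w * q, by linear_combination -w * hq⟩⟩
      · show iotaH m 2 _ ∈ _ ↔ _
        rw [iotaH_2, mem_ker_psi]
        push_cast
        constructor
        · rintro ⟨⟨p, hp⟩, q, hq⟩
          exact ⟨-w * q - r * p, by linear_combination -(w : ZMod m) * hq - (n * r) * hp + s * hr'⟩
        · rintro ⟨q, hq⟩
          exact ⟨⟨-n * q, by linear_combination -hq⟩, ⟨(w - 1) * q, by linear_combination (w - 1) * hq⟩⟩
    rw [← iotaH_range]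
    ext u
    constructor
    · rintro ⟨h1, ⟨s, rfl⟩⟩
      refine ⟨s, ?_, rfl⟩
      exact (cast_zero_iff hd _).mpr ((hmem (Multiplicative.toAdd s)).mp h1)
    · rintro ⟨s, h1, rfl⟩
      exact ⟨(hmem (Multiplicative.toAdd s)).mpr ((cast_zero_iff hd _).mp h1), ⟨s, rfl⟩⟩
  rw [key, Subgroup.card_map_of_injective (iotaH_inj i)]
  have := card_cast_ker hd
  exact Nat.eq_of_mul_eq_mul_right hkn (this.trans hm)

lemma cube_one {m : ℕ} (g : Mgrp m) (hg : g.right = rot) : g ^ 3 = 1 := by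
  have h3 : rot ^ 3 = 1 := by unfold rot; decide
  ext1
  · rw [pow_three, SemidirectProduct.mul_left, SemidirectProduct.mul_left, hg, map_mul,
      ← mul_assoc, permW_norm]
    rfl
  · rw [pow_three, SemidirectProduct.mul_right, SemidirectProduct.mul_right, hg, ← pow_three, h3]
    rfl

/-- the generator -/
def genT {m : ℕ} (t : Wgrp m) : Mgrp m := ⟨t, rot⟩

lemma genT_cube {m : ℕ} (t : Wgrp m) : genT t ^ 3 = 1 := cube_one _ rfl

lemma genT_conj {m : ℕ} (t u : Wgrp m) :
    genT t * SemidirectProduct.inl u = SemidirectProduct.inl (permW m rot u) * genT t := by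
  ext1
  · simp [genT, mul_comm]
  · simp [genT]

lemma genT_pow_conj {m : ℕ} (t : Wgrp m) (N : Subgroup (Wgrp m))
    (hN : ∀ u ∈ N, permW m rot u ∈ N) (j : ℕ) : ∀ u ∈ N, ∃ u' ∈ N,
    genT t ^ j * SemidirectProduct.inl u = SemidirectProduct.inl u' * genT t ^ j := by
  induction j with
  | zero => intro u hu; exact ⟨u, hu, by simp⟩
  | succ j ih =>
    intro u hu
    obtain ⟨u', hu', h⟩ := ih _ (hN u hu)
    refine ⟨u', hu', ?_⟩
    rw [pow_succ, mul_assoc, genT_conj, ← mul_assoc, h, mul_assoc]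

/-- the group G -/
def GG {m : ℕ} (t : Wgrp m) (N : Subgroup (Wgrp m))
    (hN : ∀ u ∈ N, permW m rot u ∈ N) : Subgroup (Mgrp m) where
  carrier := {g | ∃ u ∈ N, ∃ j : ℕ, g = SemidirectProduct.inl u * genT t ^ j}
  one_mem' := ⟨1, N.one_mem, 0, by simp⟩
  mul_mem' := by
    rintro _ _ ⟨u, hu, j, rfl⟩ ⟨v, hv, i, rfl⟩
    obtain ⟨v', hv', h⟩ := genT_pow_conj t N hN j v hv
    refine ⟨u * v', N.mul_mem hu hv', j + i, ?_⟩
    rw [map_mul, pow_add, mul_assoc, ← mul_assoc _ _ (genT t ^ i), h]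
    simp only [mul_assoc]
  inv_mem' := by
    rintro _ ⟨u, hu, j, rfl⟩
    obtain ⟨v', hv', h⟩ := genT_pow_conj t N hN (2 * j) u⁻¹ (N.inv_mem hu)
    refine ⟨v', hv', 2 * j, ?_⟩
    rw [← h, mul_inv_rev, map_inv]
    congr 1
    rw [inv_eq_iff_mul_eq_one, ← pow_add, show j + 2 * j = 3 * j by ring, pow_mul, genT_cube, one_pow]

lemma GG_NG {m : ℕ} (t : Wgrp m) (N : Subgroup (Wgrp m))
    (hN : ∀ u ∈ N, permW m rot u ∈ N) :
    NG (GG t N hN) = N.map (SemidirectProduct.inl : Wgrp m →* Mgrp m) := by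
  ext g
  constructor
  · rintro ⟨⟨u, hu, j, rfl⟩, h⟩
    have h' : rot ^ j = 1 := by
      have := MonoidHom.mem_ker.mp h
      rw [map_mul, SemidirectProduct.rightHom_inl, one_mul, map_pow] at this
      exact this
    have h3 : 3 ∣ j := by
      rw [← rot_three.orderOf]; exact orderOf_dvd_of_pow_eq_one h'
    obtain ⟨i, rfl⟩ := h3
    refine ⟨u, hu, ?_⟩
    rw [pow_mul, genT_cube, one_pow, mul_one]
  · rintro ⟨u, hu, rfl⟩
    exact ⟨⟨u, hu, 0, by simp⟩, by simp⟩

lemma GG_map {m : ℕ} (t : Wgrp m) (N : Subgroup (Wgrp m))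
    (hN : ∀ u ∈ N, permW m rot u ∈ N) :
    (GG t N hN).map (SemidirectProduct.rightHom : Mgrp m →* Equiv.Perm (Fin 3)) =
        Subgroup.zpowers rot := by
  ext p
  constructor
  · rintro ⟨_, ⟨u, hu, j, rfl⟩, rfl⟩
    rw [map_mul, SemidirectProduct.rightHom_inl, one_mul, map_pow]
    exact Subgroup.pow_mem _ (Subgroup.mem_zpowers _) j
  · intro hp
    have : rot ∈ (GG t N hN).map (SemidirectProduct.rightHom : Mgrp m →* Equiv.Perm (Fin 3)) :=
      ⟨genT t, ⟨1, N.one_mem, 1, by simp⟩, rfl⟩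
    exact (Subgroup.zpowers_le.mpr this) hp

lemma GG_right {m : ℕ} (t : Wgrp m) (N : Subgroup (Wgrp m))
    (hN : ∀ u ∈ N, permW m rot u ∈ N) (x : Mgrp m) (hx : x ∈ GG t N hN)
    (hx' : x ∉ NG (GG t N hN)) : x.right ≠ 1 ∧ (x.right = rot ∨ x.right = rot⁻¹) := by
  have h1 : x.right ≠ 1 := fun h => hx' ⟨hx, h⟩
  refine ⟨h1, ?_⟩
  have : x.right ∈ Subgroup.zpowers rot := by
    rw [← GG_map t N hN]; exact ⟨x, hx, rfl⟩
  have h2 : ∀ p : Equiv.Perm (Fin 3), Equiv.Perm.sign p = 1 → p ≠ 1 → p = rot ∨ p = rot⁻¹ := by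
    unfold rot; decide
  refine h2 _ ?_ h1
  obtain ⟨j, hj⟩ := this
  rw [← hj, map_zpow, rot_three.sign, one_zpow]

lemma GG_order {m : ℕ} (t : Wgrp m) (N : Subgroup (Wgrp m))
    (hN : ∀ u ∈ N, permW m rot u ∈ N) (x : Mgrp m) (hx : x ∈ GG t N hN)
    (hx' : x ∉ NG (GG t N hN)) : orderOf x = 3 := by
  obtain ⟨h1, h2⟩ := GG_right t N hN x hx hx'
  have : Fact (Nat.Prime 3) := ⟨Nat.prime_three⟩
  refine orderOf_eq_prime ?_ (fun h => h1 (by rw [h]; rfl))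
  rcases h2 with h | h
  · exact cube_one x h
  · rw [← inv_inj, ← inv_pow, inv_one]
    exact cube_one _ (by rw [SemidirectProduct.inv_right, h, inv_inv])

lemma card_split {A B : Type*} [Group A] [Group B] (f : A →* B) (K : Subgroup A) :
    Nat.card (K ⊓ f.ker : Subgroup A) * Nat.card (K.map f) = Nat.card K := by
  rw [← Subgroup.relIndex_ker, ← Subgroup.inf_relIndex_left, ]
  have := Subgroup.card_mul_index ((K ⊓ f.ker).subgroupOf K)
  rw [Nat.card_congr (Subgroup.subgroupOfEquivOfLe inf_le_left).toEquiv] at this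
  exact this

lemma GG_card {m : ℕ} (t : Wgrp m) (N : Subgroup (Wgrp m))
    (hN : ∀ u ∈ N, permW m rot u ∈ N) : Nat.card (GG t N hN) = 3 * Nat.card N := by
  have := card_split (SemidirectProduct.rightHom : Mgrp m →* Equiv.Perm (Fin 3)) (GG t N hN)
  rw [GG_map, Nat.card_zpowers, rot_three.orderOf] at this
  have h2 := GG_NG t N hN
  unfold NG at h2
  rw [h2, Subgroup.card_map_of_injective SemidirectProduct.inl_injective] at this
  rw [mul_comm]; exact this.symm

lemma NG_card {m : ℕ} (t : Wgrp m) (N : Subgroup (Wgrp m))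
    (hN : ∀ u ∈ N, permW m rot u ∈ N) : Nat.card (NG (GG t N hN)) = Nat.card N := by
  rw [GG_NG, Subgroup.card_map_of_injective SemidirectProduct.inl_injective]

lemma card_diff {A : Type*} [Group A] [Finite A] (K L : Subgroup A) (h : L ≤ K) :
    Nat.card {x : A // x ∈ K ∧ x ∉ L} + Nat.card L = Nat.card K := by
  have := Set.ncard_sdiff_add_ncard_of_subset (s := (L : Set A)) (t := (K : Set A)) h
  exact this

instance finM {m : ℕ} [NeZero m] : Finite (Mgrp m) :=
  Finite.of_equiv _ SemidirectProduct.equivProd.symm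

lemma count_one {m : ℕ} [NeZero m] (t : Wgrp m) (N : Subgroup (Wgrp m))
    (hN : ∀ u ∈ N, permW m rot u ∈ N) (h3 : ∀ u ∈ N, s3Hom m u = 1) (ht : s3Hom m t = 1) :
    Nat.card {x : Mgrp m // x ∈ GG t N hN ∧ x ∉ NG (GG t N hN) ∧
      x.left ∈ MonoidHom.ker (s3Hom m)} = 2 * Nat.card N := by
  have h : ∀ x ∈ GG t N hN, s3M m x = 1 := by
    rintro _ ⟨u, hu, j, rfl⟩
    have h1 : s3M m (SemidirectProduct.inl u) = 1 := h3 u hu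
    have h2 : s3M m (genT t) = 1 := ht
    rw [map_mul, map_pow, h1, h2, one_pow, one_mul]
  have h2 := card_diff (GG t N hN) (NG (GG t N hN)) inf_le_left
  rw [GG_card, NG_card] at h2
  have h4 : Nat.card {x : Mgrp m // x ∈ GG t N hN ∧ x ∉ NG (GG t N hN) ∧
      x.left ∈ MonoidHom.ker (s3Hom m)} =
      Nat.card {x : Mgrp m // x ∈ GG t N hN ∧ x ∉ NG (GG t N hN)} :=
    Nat.card_congr (Equiv.subtypeEquivRight fun x =>
      ⟨fun hx => ⟨hx.1, hx.2.1⟩, fun hx => ⟨hx.1, hx.2, h x hx.1⟩⟩)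
  omega

lemma count_zero {m : ℕ} (t : Wgrp m) (N : Subgroup (Wgrp m))
    (hN : ∀ u ∈ N, permW m rot u ∈ N) (h3 : ∀ u ∈ N, s3Hom m u = 1) (ht : s3Hom m t ≠ 1) :
    Nat.card {x : Mgrp m // x ∈ GG t N hN ∧ x ∉ NG (GG t N hN) ∧
      x.left ∈ MonoidHom.ker (s3Hom m)} = 0 := by
  have : IsEmpty {x : Mgrp m // x ∈ GG t N hN ∧ x ∉ NG (GG t N hN) ∧
      x.left ∈ MonoidHom.ker (s3Hom m)} := by
    constructor
    rintro ⟨_, ⟨u, hu, j, rfl⟩, hx, hk⟩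
    have hk' : s3M m (SemidirectProduct.inl u * genT t ^ j) = 1 := hk
    have h1 : s3M m (SemidirectProduct.inl u) = 1 := h3 u hu
    rw [map_mul, map_pow, h1, one_mul] at hk'
    have h2 : s3M m (genT t) ≠ 1 := ht
    have h4 : s3M m (genT t) ^ 3 = 1 := by rw [← map_pow, genT_cube, map_one]
    have : Fact (Nat.Prime 3) := ⟨Nat.prime_three⟩
    have h5 : 3 ∣ j := by
      rw [← orderOf_eq_prime h4 h2]; exact orderOf_dvd_of_pow_eq_one hk'
    obtain ⟨i, rfl⟩ := h5
    apply hx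
    rw [GG_NG]
    exact ⟨u, hu, by rw [pow_mul, genT_cube, one_pow, mul_one]⟩
  exact Nat.card_of_isEmpty

lemma count_third {m : ℕ} [NeZero m] (hm3 : 3 ∣ m) (t : Wgrp m) (N : Subgroup (Wgrp m))
    (hN : ∀ u ∈ N, permW m rot u ∈ N) (u : Wgrp m) (hu : u ∈ N) (h3 : s3Hom m u ≠ 1) :
    Nat.card {x : Mgrp m // x ∈ GG t N hN ∧ x ∉ NG (GG t N hN) ∧
      x.left ∈ MonoidHom.ker (s3Hom m)} = 2 * Nat.card N / 3 := by
  have hc := card_quot3 hm3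
  have : Fact (Nat.Prime (Nat.card (Multiplicative (ZMod m ⧸ threeSub m)))) := ⟨hc ▸ Nat.prime_three⟩
  have hmem : SemidirectProduct.inl u ∈ NG (GG t N hN) := by rw [GG_NG]; exact ⟨u, hu, rfl⟩
  have hne : s3M m (SemidirectProduct.inl u) ≠ 1 := h3
  have himg : ∀ K : Subgroup (Mgrp m), SemidirectProduct.inl u ∈ K →
      Nat.card (K.map (s3M m)) = 3 := by
    intro K hK
    rcases Subgroup.eq_bot_or_eq_top_of_prime_card (K.map (s3M m)) with h | h
    · exfalso
      have : s3M m (SemidirectProduct.inl u) ∈ K.map (s3M m) := ⟨_, hK, rfl⟩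
      rw [h] at this
      exact hne (Subgroup.mem_bot.mp this)
    · rw [h, Subgroup.card_top, hc]
  have e1 := card_split (s3M m) (GG t N hN)
  have e2 := card_split (s3M m) (NG (GG t N hN))
  rw [himg _ hmem, NG_card] at e2
  rw [himg _ hmem.1, GG_card] at e1
  have h2 := card_diff (GG t N hN ⊓ (s3M m).ker) (NG (GG t N hN) ⊓ (s3M m).ker)
    (inf_le_inf_right _ inf_le_left)
  have h4 : Nat.card {x : Mgrp m // x ∈ GG t N hN ∧ x ∉ NG (GG t N hN) ∧
      x.left ∈ MonoidHom.ker (s3Hom m)} =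
      Nat.card {x : Mgrp m // x ∈ GG t N hN ⊓ (s3M m).ker ∧ x ∉ NG (GG t N hN) ⊓ (s3M m).ker} :=
    Nat.card_congr (Equiv.subtypeEquivRight fun x =>
      ⟨fun hx => ⟨⟨hx.1, hx.2.2⟩, fun h => hx.2.1 h.1⟩,
       fun hx => ⟨hx.1.1, fun h => hx.2 ⟨h, hx.1.2⟩, hx.1.2⟩⟩)
  omega

lemma three_dvd_of {w n r : ℕ} (hr : w ^ 2 + 1 = n * r + w) (h : 3 ∣ n) : 3 ∣ w + 1 := by
  obtain ⟨c, rfl⟩ := h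
  have h0 : (w : ZMod 3) ^ 2 + 1 = w := by
    have := congrArg (Nat.cast (R := ZMod 3)) hr
    push_cast at this
    rw [this, show (3 : ZMod 3) = 0 from rfl]; ring
  rw [← ZMod.natCast_eq_zero_iff]
  push_cast
  generalize (w : ZMod 3) = y at h0
  revert y; decide

lemma s3_trivial {m k n w r : ℕ} (hk : k ∣ m) (hd : k * n ∣ m) (hr : w ^ 2 + 1 = n * r + w)
    (h : 3 ∣ k * n) (u : Wgrp m) (hu : u ∈ (psiW hk hd w).ker) : s3Hom m u = 1 := by
  obtain ⟨x, y, z, rfl⟩ := cls_exists u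
  rw [mem_ker_psi] at hu
  rw [s3_cls_one]
  obtain ⟨⟨p, hp⟩, q, hq⟩ := hu
  have h2 : 3 ∣ (w + 1) * k := by
    rcases (Nat.Prime.dvd_mul Nat.prime_three).mp h with h | h
    · exact h.mul_left _
    · exact (three_dvd_of hr h).mul_right _
  obtain ⟨b, hb⟩ := h
  obtain ⟨c, hc⟩ := h2
  have hb' := congrArg (Nat.cast (R := ZMod m)) hb
  have hc' := congrArg (Nat.cast (R := ZMod m)) hc
  push_cast at hb' hc' hq
  refine ⟨b * q + c * p + z, ?_⟩
  linear_combination hq + (w + 1) * hp + q * hb' + p * hc'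

lemma s3_nontrivial {m d : ℕ} (hm3 : 3 ∣ m) (h : ¬ 3 ∣ d) :
    s3Hom m (cls (d : ZMod m) 0 0) ≠ 1 := by
  intro h1
  rw [s3_cls_one] at h1
  obtain ⟨q, hq⟩ := h1
  have : ZMod.castHom hm3 (ZMod 3) (d : ZMod m) = 0 :=
    (cast_zero_iff hm3 _).mpr ⟨q, by push_cast; rw [← hq]; ring⟩
  rw [map_natCast, ZMod.natCast_eq_zero_iff] at this
  exact h this

/-- Proposition 3.6(i) of Dalla Volta–Montanucci–Zini (case `3 ∣ m`): existence part.
The final count is of the elements of `G ∖ N(G)` whose `W`-component lies in `ker s₃`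
(those of type (B1), the others being of type (B3)). -/
theorem stmt12 (m : ℕ) (hm : 3 ≤ m) (hm3 : 3 ∣ m) (a e l : ℕ)
    (ha0 : 0 < a) (he0 : 0 < e) (hl0 : 0 < l)
    (h1 : e ∣ m ^ 2) (h2 : a ^ 2 ∣ e) (h3 : e / a ∣ m)
    (h4 : Odd (e / a ^ 2)) (h5 : Nat.gcd (e / a ^ 2) a = 1) (h6 : l ∣ m)
    (h7 : ∃ w : ℕ, 0 < w ∧ (e / a ^ 2) ∣ (w ^ 2 - w + 1)) :
    ∃ G : Subgroup (Mgrp m), ∃ σ : Equiv.Perm (Fin 3), σ.IsThreeCycle ∧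
      Nat.card ↥G = 3 * e ∧
      Nat.card ↥(NG G) = e ∧
      G.map (SemidirectProduct.rightHom : Mgrp m →* Equiv.Perm (Fin 3)) =
        Subgroup.zpowers σ ∧
      (∀ i : Fin 3, Nat.card ↥(NG G ⊓ HsubM m i) = a) ∧
      (∀ x ∈ G, x ∉ NG G → orderOf x = 3) ∧
      (let B := Nat.card
        {x : Mgrp m // x ∈ G ∧ x ∉ NG G ∧ x.left ∈ MonoidHom.ker (s3Hom m)}
       (a ∣ m / 3 → l ∣ m / 3 → B = 2 * e) ∧
       (a ∣ m / 3 → ¬ l ∣ m / 3 → B = 0) ∧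
       (¬ a ∣ m / 3 → B = 2 * e / 3)) := by
  obtain ⟨w, hw0, hw⟩ := h7
  obtain ⟨n, rfl⟩ := h2
  have ha2 : 0 < a ^ 2 := by positivity
  rw [Nat.mul_div_cancel_left _ ha2] at hw
  have hea : a ^ 2 * n / a = a * n := by
    rw [pow_two, mul_assoc, Nat.mul_div_cancel_left _ ha0]
  rw [hea] at h3
  obtain ⟨k, hmk⟩ := h3
  have hmk' : m = a * (k * n) := by rw [hmk]; ring
  have hm0 : m ≠ 0 := by omega
  have : NeZero m := ⟨hm0⟩
  have hkn : 0 < k * n := Nat.pos_of_ne_zero (fun h => hm0 (by rw [hmk', h, mul_zero]))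
  have hk : k ∣ m := ⟨a * n, by rw [hmk]; ring⟩
  have hd : k * n ∣ m := ⟨a, by rw [hmk]; ring⟩
  obtain ⟨r, hr0⟩ := hw
  have hr : w ^ 2 + 1 = n * r + w := by
    have : w ≤ w ^ 2 := Nat.le_self_pow (by norm_num) w
    omega
  have hN := ker_psi_perm hk hd r hr
  have hcard : Nat.card (psiW hk hd w).ker = a ^ 2 * n := by
    have h := card_ker_psi hm0 hk hd w
    have hpos : 0 < k * (k * n) := Nat.mul_pos (Nat.pos_of_mul_pos_right hkn) hkn
    refine Nat.eq_of_mul_eq_mul_right hpos (h.trans ?_)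
    rw [hmk]; ring
  have h3a : a ∣ m / 3 ↔ 3 ∣ k * n := by
    rw [Nat.dvd_div_iff_mul_dvd hm3, hmk', mul_comm 3 a, Nat.mul_dvd_mul_iff_left ha0]
  obtain ⟨t, ht⟩ : ∃ t : Wgrp m, (l ∣ m / 3 → s3Hom m t = 1) ∧ (¬ l ∣ m / 3 → s3Hom m t ≠ 1) := by
    by_cases hl : l ∣ m / 3
    · exact ⟨1, fun _ => map_one _, fun h => absurd hl h⟩
    · exact ⟨cls ((1 : ℕ) : ZMod m) 0 0, fun h => absurd h hl,
        fun _ => s3_nontrivial hm3 (by norm_num)⟩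
  refine ⟨GG t _ hN, rot, rot_three, ?_, ?_, GG_map t _ hN, ?_, GG_order t _ hN, ?_, ?_, ?_⟩
  · rw [GG_card, hcard]
  · rw [NG_card, hcard]
  · intro i
    rw [GG_NG, HsubM, ← Subgroup.map_inf _ _ _ SemidirectProduct.inl_injective,
      Subgroup.card_map_of_injective SemidirectProduct.inl_injective]
    exact card_ker_H hmk' hkn hk hd r hr i
  · intro hA hl
    rw [count_one t _ hN (s3_trivial hk hd hr (h3a.mp hA)) (ht.1 hl), hcard]
  · intro hA hl
    exact count_zero t _ hN (s3_trivial hk hd hr (h3a.mp hA)) (ht.2 hl)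
  · intro hA
    rw [count_third hm3 t _ hN (cls ((k * n : ℕ) : ZMod m) 0 0) ?_
      (s3_nontrivial hm3 (fun h => hA (h3a.mpr h))), hcard]
    rw [mem_ker_psi]
    exact ⟨⟨0, by simp⟩, ⟨1, by simp⟩⟩
end

section
/- Let m ≥ 2 and let a be a divisor of m. Let e = a², or e = 3a² provided that 3 | m and 3 ∤ a. Then there exists a subgroup G of M with |G| = 6e such that N(G) has order e, π(G) = S₃, and |N(G) ∩ H_i| = a for each i ∈ {1,2,3}. -/
lemma aux_mem_iff {m : ℕ} (K : Subgroup (Vgrp m)) (hK : Δgrp m ≤ K) (v : Vgrp m) :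
    (QuotientGroup.mk v : Wgrp m) ∈ K.map (QuotientGroup.mk' (Δgrp m)) ↔ v ∈ K := by
  constructor
  · rintro ⟨w, hw, h⟩
    have h2 : w⁻¹ * v ∈ Δgrp m := QuotientGroup.eq.mp h
    have := K.mul_mem hw (hK h2)
    simpa using this
  · intro h
    exact ⟨v, h, rfl⟩

lemma aux_eq_iff {m : ℕ} (v w : Vgrp m) :
    (QuotientGroup.mk v : Wgrp m) = QuotientGroup.mk w ↔
      ∃ t : Multiplicative (ZMod m), ∀ i, w i = v i * t := by
  rw [QuotientGroup.eq]
  constructor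
  · rintro ⟨t, ht⟩
    refine ⟨t, fun i => ?_⟩
    have := congrFun ht i
    change t = (v i)⁻¹ * w i at this
    rw [this]; simp
  · rintro ⟨t, ht⟩
    refine ⟨t, ?_⟩
    funext i
    change t = (v i)⁻¹ * w i
    rw [ht i]; simp

lemma aux_cardN {m : ℕ} (K : Subgroup (Vgrp m)) (hK : Δgrp m ≤ K) :
    Nat.card ↥(K.map (QuotientGroup.mk' (Δgrp m))) =
      Nat.card {p : Multiplicative (ZMod m) × Multiplicative (ZMod m) //
        (![p.1, 1, p.2] : Vgrp m) ∈ K} := by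
  symm
  refine Nat.card_congr (Equiv.ofBijective
    (fun p => ⟨QuotientGroup.mk (![p.1.1, 1, p.1.2] : Vgrp m), (aux_mem_iff K hK _).2 p.2⟩)
    ⟨?_, ?_⟩)
  · rintro ⟨⟨x, y⟩, h⟩ ⟨⟨x', y'⟩, h'⟩ e
    have e2 := congrArg Subtype.val e
    obtain ⟨t, ht⟩ := (aux_eq_iff _ _).1 e2
    have h0 := ht 0
    have h1 := ht 1
    have h2 := ht 2
    simp at h0 h1 h2
    subst h1
    simp at h0 h2
    subst h0 h2
    rfl
  · rintro ⟨w, hw⟩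
    obtain ⟨v, rfl⟩ := QuotientGroup.mk_surjective w
    have key : (QuotientGroup.mk (![v 0 / v 1, 1, v 2 / v 1] : Vgrp m) : Wgrp m)
        = QuotientGroup.mk v := by
      rw [aux_eq_iff]
      refine ⟨v 1, fun i => ?_⟩
      fin_cases i <;> simp
    refine ⟨⟨(v 0 / v 1, v 2 / v 1), ?_⟩, ?_⟩
    · rw [← aux_mem_iff K hK]
      change (QuotientGroup.mk (![v 0 / v 1, 1, v 2 / v 1] : Vgrp m) : Wgrp m) ∈ _
      rw [key]; exact hw
    · exact Subtype.ext key

lemma aux_cardH {m : ℕ} (K : Subgroup (Vgrp m)) (hK : Δgrp m ≤ K) (i : Fin 3) :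
    Nat.card ↥(K.map (QuotientGroup.mk' (Δgrp m)) ⊓ Hsub m i) =
      Nat.card {t : Multiplicative (ZMod m) // (Pi.mulSingle i t : Vgrp m) ∈ K} := by
  have hs : ∀ t : Multiplicative (ZMod m), (Pi.mulSingle i t : Vgrp m) ∈ HV m i := by
    intro t
    change (Pi.mulSingle i t : Vgrp m) (i + 1) / (Pi.mulSingle i t : Vgrp m) (i + 2) = 1
    fin_cases i <;> simp [Pi.mulSingle, Function.update]
  symm
  refine Nat.card_congr (Equiv.ofBijective
    (fun p => ⟨QuotientGroup.mk (Pi.mulSingle i p.1 : Vgrp m),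
      (aux_mem_iff K hK _).2 p.2, ⟨_, hs p.1, rfl⟩⟩)
    ⟨?_, ?_⟩)
  · rintro ⟨x, h⟩ ⟨x', h'⟩ e
    have e2 := congrArg Subtype.val e
    obtain ⟨t, ht⟩ := (aux_eq_iff _ _).1 e2
    have h0 := ht i
    have h1 := ht (i + 1)
    have hne : i + 1 ≠ i := by fin_cases i <;> decide
    simp [Pi.mulSingle, Function.update, hne] at h0 h1
    subst h1
    simp at h0
    exact Subtype.ext h0.symm
  · rintro ⟨w, hw, ⟨v, hv, rfl⟩⟩
    have hv2 : v (i + 1) / v (i + 2) = 1 := hv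
    have key : (QuotientGroup.mk (Pi.mulSingle i (v i / v (i + 1)) : Vgrp m) : Wgrp m)
        = QuotientGroup.mk v := by
      rw [aux_eq_iff]
      refine ⟨v (i + 1), fun j => ?_⟩
      rw [div_eq_one] at hv2
      fin_cases i <;> fin_cases j <;> simp_all [Pi.mulSingle, Function.update]
    refine ⟨⟨v i / v (i + 1), ?_⟩, ?_⟩
    · rw [← aux_mem_iff K hK, key]; exact hw
    · exact Subtype.ext key

lemma aux_main {m : ℕ} (K : Subgroup (Vgrp m)) (hK : Δgrp m ≤ K)
    (hinv : ∀ (σ : Equiv.Perm (Fin 3)) (v : Vgrp m), v ∈ K → (fun i => v (σ i)) ∈ K) (a e : ℕ)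
    (he : Nat.card {p : Multiplicative (ZMod m) × Multiplicative (ZMod m) //
        (![p.1, 1, p.2] : Vgrp m) ∈ K} = e)
    (ha : ∀ i, Nat.card {t : Multiplicative (ZMod m) // (Pi.mulSingle i t : Vgrp m) ∈ K} = a) :
    ∃ G : Subgroup (Mgrp m),
      Nat.card ↥G = 6 * e ∧
      Nat.card ↥(NG G) = e ∧
      G.map (SemidirectProduct.rightHom : Mgrp m →* Equiv.Perm (Fin 3)) = ⊤ ∧
      ∀ i : Fin 3, Nat.card ↥(NG G ⊓ HsubM m i) = a := by
  set N := K.map (QuotientGroup.mk' (Δgrp m)) with hN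
  have hNinv : ∀ (σ : Equiv.Perm (Fin 3)) (w : Wgrp m), w ∈ N → permW m σ w ∈ N := by
    rintro σ _ ⟨v, hv, rfl⟩
    exact ⟨_, hinv σ⁻¹ v hv, rfl⟩
  let G : Subgroup (Mgrp m) :=
    { carrier := {g | g.left ∈ N}
      one_mem' := N.one_mem
      mul_mem' := by
        intro x y hx hy
        exact N.mul_mem hx (hNinv _ _ hy)
      inv_mem' := by
        intro x hx
        exact hNinv _ _ (N.inv_mem hx) }
  have hG : ∀ g : Mgrp m, g ∈ G ↔ g.left ∈ N := fun g => Iff.rfl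
  have hNG : NG G = N.map (SemidirectProduct.inl : Wgrp m →* Mgrp m) := by
    ext g
    constructor
    · rintro ⟨h1, h2⟩
      have h2' : g.right = 1 := h2
      exact ⟨g.left, h1, SemidirectProduct.ext rfl h2'.symm⟩
    · rintro ⟨w, hw, rfl⟩
      exact ⟨hw, rfl⟩
  have hcN : Nat.card N = e := by rw [hN, aux_cardN K hK, he]
  refine ⟨G, ?_, ?_, ?_, ?_⟩
  · have : Nat.card G = Nat.card (N × Equiv.Perm (Fin 3)) :=
      Nat.card_congr
        { toFun := fun g => (⟨g.1.left, g.2⟩, g.1.right)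
          invFun := fun p => ⟨⟨p.1.1, p.2⟩, p.1.2⟩
          left_inv := fun _ => rfl
          right_inv := fun _ => rfl }
    rw [this, Nat.card_prod, hcN, Nat.card_eq_fintype_card, Fintype.card_perm, Fintype.card_fin,
      mul_comm]
    rfl
  · rw [hNG, Subgroup.card_map_of_injective SemidirectProduct.inl_injective, hcN]
  · rw [eq_top_iff]
    intro σ _
    exact ⟨⟨1, σ⟩, N.one_mem, rfl⟩
  · intro i
    rw [hNG, HsubM, ← Subgroup.map_inf _ _ _ SemidirectProduct.inl_injective,
      Subgroup.card_map_of_injective SemidirectProduct.inl_injective, hN, aux_cardH K hK, ha]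

lemma aux_tors {m : ℕ} (hm : 2 ≤ m) (d : ℕ) (hd : d ∣ m) :
    Nat.card {t : Multiplicative (ZMod m) // t ^ d = 1} = d := by
  haveI : NeZero m := ⟨by omega⟩
  have h := IsCyclic.card_powMonoidHom_ker (G := Multiplicative (ZMod m)) d
  have h2 : Nat.card (Multiplicative (ZMod m)) = m := Nat.card_zmod m
  rw [h2, Nat.gcd_eq_right hd] at h
  exact h

/-- Triples whose differences are `a`-torsion. -/
def auxK1 (m a : ℕ) : Subgroup (Vgrp m) where
  carrier := {v | ∀ i j, v i ^ a = v j ^ a}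
  one_mem' := fun _ _ => rfl
  mul_mem' := by
    intro x y hx hy i j
    simp only [Pi.mul_apply, mul_pow, hx i j, hy i j]
  inv_mem' := by
    intro x hx i j
    simp only [Pi.inv_apply, inv_pow, hx i j]

/-- Triples `v` with `a (v 0 + v 1 + v 2) = 3 a (v i)` for each `i`. -/
def auxK2 (m a : ℕ) : Subgroup (Vgrp m) where
  carrier := {v | ∀ i, (∏ j, v j) ^ a = v i ^ (3 * a)}
  one_mem' := by intro i; simp
  mul_mem' := by
    intro x y hx hy i
    simp only [Pi.mul_apply, mul_pow, Finset.prod_mul_distrib, hx i, hy i]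
  inv_mem' := by
    intro x hx i
    simp only [Pi.inv_apply, inv_pow, Finset.prod_inv_distrib, hx i]

lemma aux_K1_N (m a : ℕ) (x y : Multiplicative (ZMod m)) :
    (![x, 1, y] : Vgrp m) ∈ auxK1 m a ↔ x ^ a = 1 ∧ y ^ a = 1 := by
  change (∀ i j, (![x, 1, y] : Vgrp m) i ^ a = (![x, 1, y] : Vgrp m) j ^ a) ↔ _
  simp only [Fin.forall_fin_succ, Fin.forall_fin_zero_pi]
  simp
  grind

lemma aux_K1_H (m a : ℕ) (i : Fin 3) (t : Multiplicative (ZMod m)) :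
    (Pi.mulSingle i t : Vgrp m) ∈ auxK1 m a ↔ t ^ a = 1 := by
  change (∀ k j, (Pi.mulSingle i t : Vgrp m) k ^ a = (Pi.mulSingle i t : Vgrp m) j ^ a) ↔ _
  fin_cases i <;> simp [Fin.forall_fin_succ, Pi.mulSingle, Function.update] <;> grind

lemma aux_K2_N (m a : ℕ) (x y : Multiplicative (ZMod m)) :
    (![x, 1, y] : Vgrp m) ∈ auxK2 m a ↔ x ^ (3 * a) = 1 ∧ (x * y) ^ a = 1 := by
  change (∀ i, (∏ j, (![x, 1, y] : Vgrp m) j) ^ a = (![x, 1, y] : Vgrp m) i ^ (3 * a)) ↔ _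
  simp only [Fin.prod_univ_three, Fin.forall_fin_succ]
  simp
  constructor
  · rintro ⟨h1, h2, h3⟩
    exact ⟨by rw [← h1, h2], h2⟩
  · rintro ⟨h1, h2⟩
    refine ⟨by rw [h1, h2], h2, ?_⟩
    have h : (x * y) ^ (3 * a) = 1 := by rw [mul_comm 3 a, pow_mul, h2, one_pow]
    rw [mul_pow, h1, one_mul] at h
    rw [h, h2]

lemma aux_K2_H (m a : ℕ) (i : Fin 3) (t : Multiplicative (ZMod m)) :
    (Pi.mulSingle i t : Vgrp m) ∈ auxK2 m a ↔ t ^ a = 1 := by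
  change (∀ k, (∏ j, (Pi.mulSingle i t : Vgrp m) j) ^ a =
    (Pi.mulSingle i t : Vgrp m) k ^ (3 * a)) ↔ _
  have h : t ^ a = 1 → t ^ (3 * a) = 1 := fun h => by rw [mul_comm 3 a, pow_mul, h, one_pow]
  fin_cases i <;>
    simp [Fin.forall_fin_succ, Fin.prod_univ_three, Pi.mulSingle, Function.update] <;> grind

/-- Proposition 3.8(i) of Dalla Volta–Montanucci–Zini: existence of a subgroup
`G ≤ M` with `π(G) = S₃`, `|N(G)| = e` and `|N(G) ∩ H_i| = a` for each `i`,
where `e = a²`, or `e = 3a²` provided `3 ∣ m` and `3 ∤ a`. -/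
theorem stmt14 (m : ℕ) (hm : 2 ≤ m) (a e : ℕ) (ha : a ∣ m)
    (he : e = a ^ 2 ∨ (e = 3 * a ^ 2 ∧ 3 ∣ m ∧ ¬ 3 ∣ a)) :
    ∃ G : Subgroup (Mgrp m),
      Nat.card ↥G = 6 * e ∧
      Nat.card ↥(NG G) = e ∧
      G.map (SemidirectProduct.rightHom : Mgrp m →* Equiv.Perm (Fin 3)) = ⊤ ∧
      ∀ i : Fin 3, Nat.card ↥(NG G ⊓ HsubM m i) = a := by
  rcases he with rfl | ⟨rfl, h3, h3a⟩
  · refine aux_main (auxK1 m a) ?_ ?_ a _ ?_ ?_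
    · rintro _ ⟨t, rfl⟩ i j
      rfl
    · intro σ v hv i j
      exact hv (σ i) (σ j)
    · simp only [aux_K1_N]
      rw [Nat.card_congr (Equiv.subtypeProdEquivProd
        (p := fun x : Multiplicative (ZMod m) => x ^ a = 1)
        (q := fun x : Multiplicative (ZMod m) => x ^ a = 1)), Nat.card_prod, aux_tors hm a ha, sq]
    · intro i
      simp only [aux_K1_H]
      exact aux_tors hm a ha
  · have h3d : 3 * a ∣ m :=
      Nat.Coprime.mul_dvd_of_dvd_of_dvd ((Nat.Prime.coprime_iff_not_dvd Nat.prime_three).2 h3a) h3 ha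
    refine aux_main (auxK2 m a) ?_ ?_ a _ ?_ ?_
    · rintro _ ⟨t, rfl⟩ i
      change (∏ j : Fin 3, t) ^ a = t ^ (3 * a)
      simp [pow_mul]
    · intro σ v hv i
      change (∏ j, v (σ j)) ^ a = v (σ i) ^ (3 * a)
      rw [Equiv.prod_comp σ v]
      exact hv (σ i)
    · simp only [aux_K2_N]
      have hc : Nat.card {p : Multiplicative (ZMod m) × Multiplicative (ZMod m) //
          p.1 ^ (3 * a) = 1 ∧ (p.1 * p.2) ^ a = 1} =
          Nat.card ({x : Multiplicative (ZMod m) // x ^ (3 * a) = 1} ×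
            {x : Multiplicative (ZMod m) // x ^ a = 1}) :=
        Nat.card_congr
          { toFun := fun p => (⟨p.1.1, p.2.1⟩, ⟨p.1.1 * p.1.2, p.2.2⟩)
            invFun := fun p => ⟨(p.1.1, p.1.1⁻¹ * p.2.1), p.1.2, by simpa using p.2.2⟩
            left_inv := fun p => by simp
            right_inv := fun p => by simp }
      rw [hc, Nat.card_prod, aux_tors hm a ha, aux_tors hm _ h3d]
      ring
    · intro i
      simp only [aux_K2_H]
      exact aux_tors hm a ha
end

section
/- Let H and Ω be finite groups and n a positive integer such that ω^n = 1 for every ω ∈ Ω. Let G be a subgroup of the direct product H × Ω and let N = G ∩ ({1} × Ω), a normal subgroup of G. If the quotient group G/N is generated by elements whose orders are coprime to n, then G is the internal direct product of G(H) := G ∩ (H × {1}) and N; that is, G(H) and N commute elementwise, G(H) ∩ N = {1}, and G = G(H) · N. -/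
open Pointwise

/-- Remark 4.1 of Dalla Volta–Montanucci–Zini, in its natural generality.
`H` and `Ω` are finite groups, `n` is a positive integer with `ω^n = 1` for every
`ω ∈ Ω`, and `G ≤ H × Ω`. The subgroup `N = G ∩ ({1} × Ω)` of `G` is realized as the
kernel of the first projection restricted to `G` (so that `G ⧸ N` makes sense as a
group). If `G ⧸ N` is generated by elements of order coprime to `n`, then `G` is the
internal direct product of `G(H) = G ∩ (H × {1})` and `G(Ω) = G ∩ ({1} × Ω)`. -/
theorem stmt16 (H Ω : Type*) [Group H] [Group Ω] [Finite H] [Finite Ω]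
    (n : ℕ) (hn : 0 < n) (hΩ : ∀ ω : Ω, ω ^ n = 1)
    (G : Subgroup (H × Ω))
    (hgen : ∃ S : Set (↥G ⧸ MonoidHom.ker ((MonoidHom.fst H Ω).comp G.subtype)),
      Subgroup.closure S = ⊤ ∧ ∀ x ∈ S, Nat.Coprime (orderOf x) n) :
    (∀ x ∈ G ⊓ (⊤ : Subgroup H).prod (⊥ : Subgroup Ω),
      ∀ y ∈ G ⊓ (⊥ : Subgroup H).prod (⊤ : Subgroup Ω), Commute x y) ∧
    (G ⊓ (⊤ : Subgroup H).prod (⊥ : Subgroup Ω)) ⊓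
      (G ⊓ (⊥ : Subgroup H).prod (⊤ : Subgroup Ω)) = ⊥ ∧
    ((G ⊓ (⊤ : Subgroup H).prod (⊥ : Subgroup Ω) : Subgroup (H × Ω)) : Set (H × Ω)) *
      ((G ⊓ (⊥ : Subgroup H).prod (⊤ : Subgroup Ω) : Subgroup (H × Ω)) : Set (H × Ω)) =
      (G : Set (H × Ω)) := by
  obtain ⟨S, hS, hcop⟩ := hgen
  let f : ↥G →* H × Ω := (MonoidHom.inl H Ω).comp ((MonoidHom.fst H Ω).comp G.subtype)
  have hle : Subgroup.closure S ≤ (G.comap f).map (QuotientGroup.mk' _) := by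
    rw [Subgroup.closure_le]
    intro x hx
    obtain ⟨g, rfl⟩ := QuotientGroup.mk_surjective x
    refine ⟨g, ?_, rfl⟩
    have hc := hcop _ hx
    have h1 := pow_orderOf_eq_one (g : ↥G ⧸ MonoidHom.ker ((MonoidHom.fst H Ω).comp G.subtype))
    generalize orderOf (g : ↥G ⧸ MonoidHom.ker ((MonoidHom.fst H Ω).comp G.subtype)) = m at hc h1
    rw [← QuotientGroup.mk_pow, QuotientGroup.eq_one_iff, MonoidHom.mem_ker] at h1
    have h2 : (g : H × Ω).1 ^ m = 1 := by simpa using h1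
    obtain ⟨k, hk1, hk0⟩ := Nat.chineseRemainder hc 1 0
    have h3 : (g : H × Ω).1 ^ k = (g : H × Ω).1 := by
      have := pow_eq_pow_iff_modEq (x := (g : H × Ω).1) (n := k) (m := 1)
      rw [pow_one] at this
      exact this.2 (hk1.of_dvd (orderOf_dvd_of_pow_eq_one h2))
    have h4 : (g : H × Ω).2 ^ k = 1 := by
      obtain ⟨c, rfl⟩ := (Nat.modEq_zero_iff_dvd).1 hk0
      rw [pow_mul, hΩ, one_pow]
    have h5 : f g = (g : H × Ω) ^ k := by
      ext
      · simp [f, h3]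
      · simp [f, h4]
    change f g ∈ G
    rw [h5]
    exact G.pow_mem g.2 k
  have key : ∀ g ∈ G, (g.1, (1 : Ω)) ∈ G := by
    intro g hg
    have : (QuotientGroup.mk (⟨g, hg⟩ : ↥G) :
        ↥G ⧸ MonoidHom.ker ((MonoidHom.fst H Ω).comp G.subtype)) ∈ Subgroup.closure S := by
      rw [hS]; trivial
    obtain ⟨k, hk, he⟩ := hle this
    have h1 := QuotientGroup.eq.1 he
    rw [MonoidHom.mem_ker] at h1
    have h2 : (k : H × Ω).1⁻¹ * g.1 = 1 := by simpa using h1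
    rw [inv_mul_eq_one] at h2
    rw [← h2]
    exact hk
  refine ⟨?_, ?_, ?_⟩
  · rintro ⟨a, b⟩ hx ⟨c, d⟩ hy
    simp only [Subgroup.mem_inf, Subgroup.mem_prod, Subgroup.mem_bot] at hx hy
    obtain ⟨-, -, rfl⟩ := hx
    obtain ⟨-, rfl, -⟩ := hy
    simp [Commute, SemiconjBy]
  · rw [eq_bot_iff]
    rintro ⟨a, b⟩ hx
    simp only [Subgroup.mem_inf, Subgroup.mem_prod, Subgroup.mem_bot] at hx ⊢
    obtain ⟨⟨-, -, rfl⟩, -, rfl, -⟩ := hx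
    rfl
  · ext g
    rw [Set.mem_mul]
    constructor
    · rintro ⟨x, hx, y, hy, rfl⟩
      exact G.mul_mem hx.1 hy.1
    · intro hg
      have h1 := key g hg
      refine ⟨_, ⟨h1, by simp [Subgroup.mem_prod]⟩, (g.1, (1 : Ω))⁻¹ * g,
        ⟨G.mul_mem (G.inv_mem h1) hg, by simp [Subgroup.mem_prod]⟩, mul_inv_cancel_left _ _⟩
end

section
/- For every positive integer n and every integer w, the element (−w, 1−w) of (ZMod n) × (ZMod n) belongs to the cyclic subgroup generated by (1, w) if and only if n divides w² − w + 1. -/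
/-- The key computation in the proofs of Propositions 3.5 and 3.6 of
Dalla Volta–Montanucci–Zini: `(−w, 1−w) ∈ ⟨(1, w)⟩` in `(ZMod n)²` if and only if
`n ∣ w² − w + 1`. -/
theorem stmt17 (n : ℕ) (hn : 0 < n) (w : ℤ) :
    (((-w : ℤ) : ZMod n), ((1 - w : ℤ) : ZMod n)) ∈
      AddSubgroup.zmultiples ((1 : ZMod n), ((w : ℤ) : ZMod n)) ↔
    (n : ℤ) ∣ w ^ 2 - w + 1 := by
  rw [← CharP.intCast_eq_zero_iff (ZMod n) n, AddSubgroup.mem_zmultiples_iff]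
  constructor
  · rintro ⟨k, hk⟩
    rw [Prod.ext_iff] at hk
    obtain ⟨h1, h2⟩ := hk
    simp only [Prod.smul_fst, Prod.smul_snd] at h1 h2
    simp only [zsmul_eq_mul, mul_one] at h1 h2
    push_cast at h1 h2 ⊢
    rw [h1] at h2
    linear_combination -h2
  · intro h
    refine ⟨-w, ?_⟩
    push_cast at h
    rw [Prod.ext_iff]
    simp only [Prod.smul_fst, Prod.smul_snd]
    simp only [zsmul_eq_mul, mul_one]
    refine ⟨by trivial, ?_⟩
    push_cast
    linear_combination -h
end
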